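/- Let w be a Kreweras word of length 3n. Then for every i ∈ {1,…,3n}, ε_w(i) ∈ {B, C}; moreover, if w_{σ_w(i)} ≠ A then ε_w(i) = w_{σ_w(i)}, and if w_{σ_w(i)} = A then ε_w(i) = w_{σ_w(σ_w(i))}. -/

import Mathlib

/-- The three letters of a Kreweras word. -/
inductive KLetter : Type
  | A | B | C
deriving DecidableEq, Repr

open KLetter

/-- `w` is a Kreweras word of length `3 * n`: it has `n` `A`'s, `n` `B`'s, `n` `C`'s,
and every prefix has at least as many `A`'s as `B`'s and at least as many `A`'s as `C`'s. -/
def IsKrewerasWord (n : ℕ) (w : List KLetter) : Prop :=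
  w.length = 3 * n ∧ w.count A = n ∧ w.count B = n ∧ w.count C = n ∧
  ∀ k : ℕ, (w.take k).count B ≤ (w.take k).count A ∧
           (w.take k).count C ≤ (w.take k).count A

/-- `kiota w` is the smallest index `ι ≥ 1` (1-indexed) such that the prefix of
length `ι` of `w` has equally many `A`'s as `B`'s, or equally many `A`'s as `C`'s
(and `0` if no such index exists). -/
def kiota (w : List KLetter) : ℕ :=
  (((List.range (w.length + 1)).filter fun k =>
      decide (1 ≤ k) &&
      (((w.take k).count A == (w.take k).count B) ||
       ((w.take k).count A == (w.take k).count C))).headD 0)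

/-- Promotion of a Kreweras word:
`pro w = (w₂, …, w_{ι-1}, A, w_{ι+1}, …, w_{3n}, w_ι)` where `ι = kiota w`. -/
def pro (w : List KLetter) : List KLetter :=
  ((w.drop 1).set (kiota w - 2) A) ++ [w.getD (kiota w - 1) A]

/-- The trip permutation `σ_w` of a Kreweras word of length `3 * n`, as a function on
1-indexed positions: `σ_w i` is the unique element of `{1, …, 3n}` congruent to
`kiota (pro^[i-1] w) + i - 1` modulo `3 * n`. -/
def ksigma (n : ℕ) (w : List KLetter) (i : ℕ) : ℕ :=
  (kiota (pro^[i - 1] w) + i - 2) % (3 * n) + 1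

/-- `keps w i` is the letter of `pro^[i-1] w` in (1-indexed) position `kiota (pro^[i-1] w)`. -/
def keps (w : List KLetter) (i : ℕ) : KLetter :=
  (pro^[i - 1] w).getD (kiota (pro^[i - 1] w) - 1) A

/-- The negation swapping `B` and `C` (and fixing `A`). -/
def negL : KLetter → KLetter
  | A => A
  | B => C
  | C => B

open Classical in
/-- The involution `τ_i` on Kreweras words of length `3 * n`: swap the letters in
(1-indexed) positions `i` and `i + 1` if the result is again a Kreweras word,
and otherwise do nothing. -/
noncomputable def tau (n i : ℕ) (w : List KLetter) : List KLetter :=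
  let w' := (w.set (i - 1) (w.getD i A)).set i (w.getD (i - 1) A)
  if IsKrewerasWord n w' then w' else w

/-- `tauDown n j = τ_j ∘ τ_{j-1} ∘ ⋯ ∘ τ_1`. -/
noncomputable def tauDown (n : ℕ) : ℕ → List KLetter → List KLetter
  | 0, w => w
  | j + 1, w => tau n (j + 1) (tauDown n j w)

/-- `evacAux n j = (tauDown n 1) ∘ (tauDown n 2) ∘ ⋯ ∘ (tauDown n j)`. -/
noncomputable def evacAux (n : ℕ) : ℕ → List KLetter → List KLetter
  | 0, w => w
  | j + 1, w => evacAux n j (tauDown n (j + 1) w)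

/-- Evacuation on Kreweras words of length `3 * n`:
`evac = (τ_1) ∘ (τ_2 ∘ τ_1) ∘ ⋯ ∘ (τ_{3n-1} ∘ ⋯ ∘ τ_2 ∘ τ_1)`. -/
noncomputable def evac (n : ℕ) (w : List KLetter) : List KLetter :=
  evacAux n (3 * n - 1) w

/-- `tauAsc n k c = τ_{k+c-1} ∘ ⋯ ∘ τ_{k+1} ∘ τ_k`. -/
noncomputable def tauAsc (n k : ℕ) : ℕ → List KLetter → List KLetter
  | 0, w => w
  | j + 1, w => tau n (k + j) (tauAsc n k j w)

/-- `evacStarAux n j = (tauAsc n 1 (3n-1)) ∘ (tauAsc n 2 (3n-2)) ∘ ⋯ ∘ (tauAsc n j (3n-j))`. -/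
noncomputable def evacStarAux (n : ℕ) : ℕ → List KLetter → List KLetter
  | 0, w => w
  | j + 1, w => evacStarAux n j (tauAsc n (j + 1) (3 * n - (j + 1)) w)

/-- Dual evacuation on Kreweras words of length `3 * n`:
`evac* = (τ_{3n-1} ∘ ⋯ ∘ τ_1) ∘ (τ_{3n-1} ∘ ⋯ ∘ τ_2) ∘ ⋯ ∘ (τ_{3n-1})`. -/
noncomputable def evacStar (n : ℕ) (w : List KLetter) : List KLetter :=
  evacStarAux n (3 * n - 1) w

/-- The three-element "V"-shaped poset: `a < b`, `a < c`, with `b`, `c` incomparable. -/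
inductive VP : Type
  | a | b | c
deriving DecidableEq

instance : PartialOrder VP where
  le x y := x = y ∨ x = VP.a
  le_refl x := Or.inl rfl
  le_trans x y z hxy hyz := by
    rcases hxy with rfl | rfl
    · exact hyz
    · exact Or.inr rfl
  le_antisymm x y hxy hyx := by
    rcases hxy with rfl | rfl
    · rfl
    · rcases hyx with rfl | rfl <;> rfl

/-- The labeling of elements of `V(n) = VP × Fin n` by letters. -/
def vlabel {n : ℕ} (p : VP × Fin n) : KLetter :=
  match p.1 with
  | VP.a => A
  | VP.b => B
  | VP.c => C

/-- `L` is a linear extension of `V(n) = VP × Fin n` (with the product order):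
a list of all elements of `V(n)`, each appearing once, such that `L_i ≤ L_j`
implies `i ≤ j`. -/
def IsLinearExtension (n : ℕ) (L : List (VP × Fin n)) : Prop :=
  L.Nodup ∧ (∀ p : VP × Fin n, p ∈ L) ∧
  ∀ i j : Fin L.length, L.get i ≤ L.get j → (i : ℕ) ≤ (j : ℕ)

/-- A connected Kreweras word: a Kreweras word of length `3 * n` having no proper
nonempty consecutive substring which is itself a Kreweras word. -/
def ConnectedKrewerasWord (n : ℕ) (w : List KLetter) : Prop :=
  IsKrewerasWord n w ∧
  ∀ (u : List KLetter) (m : ℕ), u <:+: w → u ≠ [] → u ≠ w → ¬ IsKrewerasWord m u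

theorem bool_of_ne {b e : Bool} (h : b ≠ e) : b = !e := by
  cases b <;> cases e <;> simp_all

/-- height change of a letter (`none` is `A`) -/
def stp (b : Bool) : Option Bool → ℤ
  | none => 1
  | some c => if c = b then -1 else 0

def mnS (X : Set ℕ) : Set ℕ := {x | x ∈ X ∧ ∀ y ∈ X, x ≤ y}
def mxS (X : Set ℕ) : Set ℕ := {x | x ∈ X ∧ ∀ y ∈ X, y ≤ x}
def lowS (X Y : Set ℕ) : Set ℕ := {a | a ∈ X ∧ ∀ y ∈ Y, a ≤ y}

def stepS (e : Bool) (m : ℕ) (S : Bool → Set ℕ) : Bool → Set ℕ := fun b =>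
  if b = e then {a | a ∈ S e ∧ a ∉ mnS (S e)}
  else {a | (a ∈ S b ∧ a ∉ mxS (lowS (S b) (S e))) ∨ (a = m ∧ (lowS (S b) (S e)).Nonempty)}

def RunS (f : ℕ → Option Bool) : ℕ → (Bool → Set ℕ) → Set ℕ
  | 0, _ => ∅
  | m + 1, S => match f m with
    | none => RunS f m S
    | some e => mnS (S e) ∪ RunS f m (stepS e m S)

def addS (S : Bool → Set ℕ) (e : Bool) (c : ℕ) : Bool → Set ℕ := fun b =>
  if b = e then insert c (S b) else S b

theorem RunS_none {f : ℕ → Option Bool} {m : ℕ} (h : f m = none) (S : Bool → Set ℕ) :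
    RunS f (m + 1) S = RunS f m S := by
  rw [RunS, h]

theorem RunS_some {f : ℕ → Option Bool} {m : ℕ} {e : Bool} (h : f m = some e)
    (S : Bool → Set ℕ) :
    RunS f (m + 1) S = mnS (S e) ∪ RunS f m (stepS e m S) := by
  rw [RunS, h]

theorem RunS_congr {f g : ℕ → Option Bool} (m : ℕ) (S : Bool → Set ℕ)
    (h : ∀ j < m, f j = g j) : RunS f m S = RunS g m S := by
  induction m generalizing S with
  | zero => rfl
  | succ m ih =>
    have h1 := h m (by omega)
    have h2 := fun S => ih S (fun j hj => h j (by omega))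
    cases hf : f m with
    | none => rw [RunS_none hf, RunS_none (h1 ▸ hf), h2]
    | some e => rw [RunS_some hf, RunS_some (h1 ▸ hf), h2]

theorem RunS_empty (f : ℕ → Option Bool) (m : ℕ) (S : Bool → Set ℕ) (hS : ∀ b, S b = ∅) :
    RunS f m S = ∅ := by
  induction m generalizing S with
  | zero => rfl
  | succ m ih =>
    cases hf : f m with
    | none => rw [RunS_none hf, ih S hS]
    | some e =>
      rw [RunS_some hf, ih]
      · simp [mnS, hS]
      · intro b
        simp [stepS, hS, lowS]

theorem RunS_skip {f : ℕ → Option Bool} {p m : ℕ} (hpm : p ≤ m) (S : Bool → Set ℕ)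
    (h : ∀ j, p ≤ j → j < m → f j = none) : RunS f m S = RunS f p S := by
  induction m, hpm using Nat.le_induction with
  | base => rfl
  | succ m hm ih =>
    rw [RunS_none (h m hm (by omega)), ih (fun j h1 h2 => h j h1 (by omega))]

/-- popping the freshly added smallest element -/
theorem mnS_addS (S : Bool → Set ℕ) (e : Bool) (c : ℕ) (hc : ∀ b, ∀ x ∈ S b, c < x) :
    mnS (addS S e c e) = {c} := by
  ext x
  have := hc e
  simp only [mnS, addS, if_true, Set.mem_ofPred_eq, Set.mem_insert_iff, Set.mem_singleton_iff]
  constructor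
  · rintro ⟨h1 | h1, h2⟩
    · exact h1
    · have := h2 c (Or.inl rfl)
      have := hc e x h1
      omega
  · rintro rfl
    refine ⟨Or.inl rfl, ?_⟩
    rintro y (h | h)
    · omega
    · exact (this y h).le

theorem stepS_addS_same (S : Bool → Set ℕ) (e : Bool) (c m : ℕ)
    (hc : ∀ b, ∀ x ∈ S b, c < x) : stepS e m (addS S e c) = S := by
  funext b
  ext x
  by_cases hb : b = e
  · subst hb
    have h1 := mnS_addS S b c hc
    simp only [stepS, if_true, h1]
    have := hc b
    simp only [addS, if_true, Set.mem_ofPred_eq, Set.mem_insert_iff, Set.mem_singleton_iff]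
    constructor
    · tauto
    · intro h
      have := this x h
      exact ⟨Or.inr h, by omega⟩
  · have hlow : lowS (addS S e c b) (addS S e c e) = ∅ := by
      ext y
      simp only [lowS, addS, if_neg hb, if_true, Set.mem_ofPred_eq, Set.mem_insert_iff,
        Set.mem_empty_iff_false, iff_false, not_and]
      intro hy h2
      have := hc b y hy
      have := h2 c (Or.inl rfl)
      omega
    simp only [stepS, if_neg hb, hlow]
    simp [mxS, addS, hb]

theorem stepS_addS_other (S : Bool → Set ℕ) (e : Bool) (c m : ℕ) (hcm : m < c)
    (hc : ∀ b, ∀ x ∈ S b, c < x) :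
    stepS (!e) m (addS S e c) = addS (stepS (!e) c S) e m := by
  funext b
  ext x
  have hne : ∀ b : Bool, b ≠ !b := by decide
  by_cases hb : b = e
  · subst hb
    have hX : addS S b c b = insert c (S b) := by simp [addS]
    have hY : addS S b c (!b) = S (!b) := by simp [addS]
    have hlow : lowS (addS S b c b) (addS S b c (!b)) = insert c (lowS (S b) (S (!b))) := by
      rw [hX, hY]
      ext y
      simp only [lowS, Set.mem_ofPred_eq, Set.mem_insert_iff]
      constructor
      · tauto
      · rintro (h | h)
        · exact ⟨Or.inl h, fun z hz => h ▸ (hc _ z hz).le⟩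
        · tauto
    have e1 : stepS (!b) m (addS S b c) b = {a | (a ∈ insert c (S b) ∧ a ∉ mxS (insert c (lowS (S b) (S (!b))))) ∨ a = m} := by
      simp only [stepS, if_neg (hne b), hlow]
      simp [hX]
    have e2 : addS (stepS (!b) c S) b m b = insert m {a | (a ∈ S b ∧ a ∉ mxS (lowS (S b) (S (!b)))) ∨ (a = c ∧ (lowS (S b) (S (!b))).Nonempty)} := by
      simp only [addS, stepS, if_neg (hne b), if_true]
    rw [e1, e2]
    have hlc : ∀ y ∈ lowS (S b) (S (!b)), c < y := fun y hy => hc b y hy.1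
    generalize lowS (S b) (S (!b)) = Lw at *
    simp only [Set.mem_ofPred_eq, Set.mem_insert_iff]
    by_cases hx : x = m
    · simp [hx]
    simp only [hx, or_false, false_or]
    by_cases hxc : x = c
    · subst hxc
      have : x ∉ S b := fun h => lt_irrefl _ (hc b x h)
      simp only [this, false_and, true_or, true_and, false_or, mxS, Set.mem_ofPred_eq,
        Set.mem_insert_iff]
      constructor
      · intro h
        by_contra h3
        rw [Set.not_nonempty_iff_eq_empty] at h3
        subst h3
        apply h
        simp
      · rintro ⟨y, hy⟩ h
        have := h y (Or.inr hy)
        have := hlc y hy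
        omega
    · simp only [hxc, false_or, false_and, or_false]
      apply and_congr_right
      intro hxS
      rw [not_iff_not]
      simp only [mxS, Set.mem_ofPred_eq, Set.mem_insert_iff, hxc, false_or]
      have := hc b x hxS
      constructor
      · rintro ⟨h1, h2⟩
        exact ⟨h1, fun y hy => h2 y (Or.inr hy)⟩
      · rintro ⟨h1, h2⟩
        refine ⟨h1, ?_⟩
        rintro y (h | h)
        · omega
        · exact h2 y h
  · have hb' : b = !e := bool_of_ne hb
    subst hb'
    simp [stepS, addS]

theorem stepS_bound (S : Bool → Set ℕ) (e : Bool) (c m : ℕ) (hcm : m < c)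
    (hc : ∀ b, ∀ x ∈ S b, c < x) : ∀ b, ∀ x ∈ stepS e c S b, m < x := by
  intro b x hx
  simp only [stepS] at hx
  split_ifs at hx with h
  · exact hcm.trans (hc e x hx.1)
  · rcases hx with hx | hx
    · exact hcm.trans (hc b x hx.1)
    · omega

theorem RunS_K1 {f g : ℕ → Option Bool} {p q m c : ℕ} {e : Bool} (S : Bool → Set ℕ)
    (hpm : p < m) (hfp : f p = some e) (hf : ∀ j, p < j → j < m → f j = none)
    (hc : ∀ b, ∀ x ∈ S b, c < x) (hgp : g p = none)
    (hg : ∀ j, j ≠ p → j ≠ q → g j = f j) (hq : m ≤ q) :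
    RunS f m (addS S e c) = {c} ∪ RunS g m S := by
  rw [RunS_skip (show p + 1 ≤ m from hpm) _ (fun j h1 h2 => hf j (by omega) h2),
    RunS_some hfp, mnS_addS S e c hc, stepS_addS_same S e c p hc,
    RunS_skip (f := g) (show p + 1 ≤ m from hpm) _ (fun j h1 h2 => by
      rw [hg j (by omega) (by omega)]; exact hf j (by omega) h2),
    RunS_none hgp, RunS_congr (f := f) (g := g) p S (fun j hj => (hg j (by omega) (by omega)).symm)]

theorem RunS_K2 {f g : ℕ → Option Bool} {p q m c : ℕ} {e : Bool} (S : Bool → Set ℕ)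
    (hpq : p < q) (hfp : f p = some e) (hfq : f q = some (!e))
    (hf : ∀ j, p < j → j < q → f j = none)
    (hgp : g p = none) (hgq : g q = none)
    (hg : ∀ j, j ≠ p → j ≠ q → g j = f j) (hq : q < m) (hmc : m ≤ c)
    (hf2 : ∀ j, q < j → j < m → f j ≠ some e)
    (hc : ∀ b, ∀ x ∈ S b, c < x) :
    RunS f m (addS S e c) = {q} ∪ (mnS (S (!e)) ∪ RunS g m (stepS (!e) c S)) := by
  induction m generalizing S c with
  | zero => omega
  | succ m ih =>
    have hadd : addS S e c (!e) = S (!e) := by simp [addS]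
    rcases Nat.lt_or_eq_of_le (Nat.le_of_lt_succ hq) with h | h
    · cases hfm : f m with
      | none =>
        rw [RunS_none hfm, RunS_none (by rw [hg m (by omega) (by omega), hfm])]
        exact ih S h (by omega) (fun j h1 h2 => hf2 j h1 (by omega)) hc
      | some e' =>
        have h3 := hf2 m h (by omega)
        have : e' = !e := bool_of_ne (fun h4 => h3 (by rw [hfm, h4]))
        subst this
        rw [RunS_some hfm, RunS_some (by rw [hg m (by omega) (by omega), hfm]), hadd,
          stepS_addS_other S e c m (by omega) hc,
          ih (c := m) _ h le_rfl (fun j h1 h2 => hf2 j h1 (by omega))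
            (stepS_bound S _ c m (by omega) hc)]
        ext; simp only [Set.mem_union]; tauto
    · subst h
      rw [RunS_some hfq, hadd, stepS_addS_other S e c q (by omega) hc, RunS_none hgq,
        RunS_K1 (g := g) (q := q) _ hpq hfp hf (stepS_bound S _ c q (by omega) hc) hgp hg le_rfl]
      ext; simp only [Set.mem_union]; tauto

theorem RunS_K3 {f g : ℕ → Option Bool} {p q m c : ℕ} {e : Bool} (S : Bool → Set ℕ)
    (hpq : p < q) (hfp : f p = some e) (hfq : f q = some (!e))
    (hf : ∀ j, p < j → j < q → f j = none)
    (hgp : g p = none) (hgq : g q = none)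
    (hg : ∀ j, j ≠ p → j ≠ q → g j = f j) (hq : q < m) (hmc : m ≤ c)
    (hf2 : ∀ j, q < j → j < m → f j ≠ some e)
    (hc : ∀ b, ∀ x ∈ S b, c < x) :
    RunS f m (fun b => insert c (S b)) = {c} ∪ ({q} ∪ RunS g m S) := by
  have hsame : (fun b => insert c (S b)) = addS (addS S e c) (!e) c := by
    funext b
    cases b <;> cases e <;> simp [addS]
  have hmn : mnS ((fun b => insert c (S b)) (!e)) = {c} := by
    have := mnS_addS S (!e) c hc
    simpa [addS] using this
  have hstep : ∀ m, m < c → stepS (!e) m (fun b => insert c (S b)) = addS S e m := by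
    intro m hm
    funext b
    have hne : ∀ b : Bool, b ≠ !b := by decide
    have hlow : lowS (insert c (S e)) (insert c (S !e)) = {c} := by
      ext y
      simp only [lowS, Set.mem_ofPred_eq, Set.mem_insert_iff, Set.mem_singleton_iff]
      constructor
      · rintro ⟨h1 | h1, h2⟩
        · exact h1
        · have := h2 c (Or.inl rfl)
          have := hc e y h1
          omega
      · rintro rfl
        refine ⟨Or.inl rfl, ?_⟩
        rintro z (h | h)
        · omega
        · exact (hc _ z h).le
    by_cases hb : b = e
    · subst hb
      simp only [stepS, if_neg (hne b), hlow, addS, if_true]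
      ext x
      simp only [mxS, Set.mem_ofPred_eq, Set.mem_insert_iff, Set.mem_singleton_iff]
      have hx := hc b x
      constructor
      · rintro (⟨h1 | h1, h2⟩ | h)
        · exact absurd ⟨h1, fun y hy => by omega⟩ h2
        · exact Or.inr h1
        · exact Or.inl h.1
      · rintro (h | h)
        · exact Or.inr ⟨h, c, rfl⟩
        · refine Or.inl ⟨Or.inr h, fun h2 => ?_⟩
          have := hx h
          omega
    · have hb' : b = !e := bool_of_ne hb
      subst hb'
      simp only [stepS, if_true, addS, hb, if_false]
      simp only at hmn
      rw [hmn]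
      ext x
      simp only [Set.mem_ofPred_eq, Set.mem_insert_iff, Set.mem_singleton_iff]
      have hx := hc (!e) x
      constructor
      · tauto
      · intro h
        exact ⟨Or.inr h, fun h2 => by have := hx h; omega⟩
  induction m with
  | zero => omega
  | succ m ih =>
    rcases Nat.lt_or_eq_of_le (Nat.le_of_lt_succ hq) with h | h
    · cases hfm : f m with
      | none =>
        rw [RunS_none hfm, RunS_none (by rw [hg m (by omega) (by omega), hfm])]
        exact ih h (by omega) (fun j h1 h2 => hf2 j h1 (by omega))
      | some e' =>
        have h3 := hf2 m h (by omega)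
        have : e' = !e := bool_of_ne (fun h4 => h3 (by rw [hfm, h4]))
        subst this
        rw [RunS_some hfm, RunS_some (by rw [hg m (by omega) (by omega), hfm]), hmn,
          hstep m (by omega),
          RunS_K2 S hpq hfp hfq hf hgp hgq hg h le_rfl (fun j h1 h2 => hf2 j h1 (by omega))
            (fun b x hx => lt_trans (by omega) (hc b x hx))]
    · subst h
      rw [RunS_some hfq, hmn, hstep q (by omega), RunS_none hgq,
        RunS_K1 (g := g) (q := q) _ hpq hfp hf (fun b x hx => lt_trans (by omega) (hc b x hx))
          hgp hg le_rfl]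

structure Strip (N : ℕ) (U : ℕ → ℕ → Option Bool) (H : ℕ → ℕ → Bool → ℤ) (s : ℕ → ℕ)
    (e : ℕ → Bool) : Prop where
  lt : ∀ t, t < s t
  ltN : ∀ t, s t < t + N
  Us : ∀ t, U t (s t) = some (e t)
  Utop : ∀ t, U (t + 1) (t + N) = some (e t)
  Uhit : ∀ t, U (t + 1) (s t) = none
  Uother : ∀ t p, t < p → p < t + N → p ≠ s t → U (t + 1) p = U t p
  U00 : ∀ t, U t t = none
  H0 : ∀ t b, H t t b = 0
  HN : ∀ t b, H t (t + N) b = 0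
  Hnn : ∀ t p b, t ≤ p → p ≤ t + N → 0 ≤ H t p b
  Hsucc : ∀ t p b, t ≤ p → p < t + N → H t (p + 1) b = H t p b + stp b (U t p)
  Hpos : ∀ t p b, t < p → p ≤ s t → 0 < H t p b
  Hs : ∀ t, H t (s t + 1) (e t) = 0

namespace Strip

variable {N : ℕ} {U : ℕ → ℕ → Option Bool} {H : ℕ → ℕ → Bool → ℤ} {s : ℕ → ℕ} {e : ℕ → Bool}

theorem H1 (h : Strip N U H s e) (t p : ℕ) (b : Bool) (h1 : t + 1 ≤ p) (h2 : p ≤ s t) :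
    H (t + 1) p b = H t p b - 1 := by
  have hN := h.ltN t
  induction p, h1 using Nat.le_induction with
  | base =>
    rw [h.H0, h.Hsucc t t b le_rfl (by omega), h.U00, h.H0]
    simp [stp]
  | succ p hp ih =>
    rw [h.Hsucc (t + 1) p b hp (by omega), h.Hsucc t p b (by omega) (by omega),
      ih (by omega), h.Uother t p (by omega) (by omega) (by omega)]
    ring

theorem H2 (h : Strip N U H s e) (t p : ℕ) (b : Bool) (h1 : s t + 1 ≤ p) (h2 : p ≤ t + N) :
    H (t + 1) p b = H t p b + if b = e t then 1 else 0 := by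
  have hN := h.ltN t
  have hl := h.lt t
  induction p, h1 using Nat.le_induction with
  | base =>
    rw [h.Hsucc (t + 1) _ b (by omega) (by omega), h.Hsucc t _ b (by omega) (by omega),
      h.H1 t _ b (by omega) le_rfl, h.Us, h.Uhit]
    simp only [stp]
    by_cases hb : b = e t
    · simp [hb]
    · simp [hb, Ne.symm hb]
  | succ p hp ih =>
    rw [h.Hsucc (t + 1) p b (by omega) (by omega), h.Hsucc t p b (by omega) (by omega),
      ih (by omega), h.Uother t p (by omega) (by omega) (by omega)]
    ring

theorem H2s (h : Strip N U H s e) (t p : ℕ) (h1 : s t + 1 ≤ p) (h2 : p ≤ t + N) :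
    H (t + 1) p (e t) = H t p (e t) + 1 := by
  rw [h.H2 t p _ h1 h2]; simp

theorem H2o (h : Strip N U H s e) (t p : ℕ) (b : Bool) (hb : b ≠ e t) (h1 : s t + 1 ≤ p)
    (h2 : p ≤ t + N) : H (t + 1) p b = H t p b := by
  rw [h.H2 t p _ h1 h2]; simp [hb]

theorem Hhit (h : Strip N U H s e) (t : ℕ) : H t (s t) (e t) = 1 := by
  have h1 := h.Hs t
  have hl := h.lt t
  rw [h.Hsucc t _ _ (by omega) (h.ltN t), h.Us] at h1
  simp [stp] at h1
  omega

theorem Hhito (h : Strip N U H s e) (t : ℕ) (b : Bool) (hb : b ≠ e t) :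
    H t (s t + 1) b = H t (s t) b := by
  have hl := h.lt t
  rw [h.Hsucc t _ _ (by omega) (h.ltN t), h.Us]
  simp [stp, Ne.symm hb]

theorem Hge (h : Strip N U H s e) (t p : ℕ) (b : Bool) (h1 : t ≤ p) (h2 : p < t + N) :
    H t p b - 1 ≤ H t (p + 1) b ∧ H t (p + 1) b ≤ H t p b + 1 := by
  rw [h.Hsucc t p b h1 h2]
  cases U t p with
  | none => simp [stp]; omega
  | some c => simp only [stp]; split_ifs <;> constructor <;> omega

/-- letters only change by being hit, forward -/
theorem U_none (h : Strip N U H s e) {t t' p : ℕ} (htt : t ≤ t') (h1 : t' ≤ p) (h2 : p < t + N)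
    (hU : U t p = none) : U t' p = none := by
  induction t', htt using Nat.le_induction with
  | base => exact hU
  | succ t' ht ih =>
    by_cases hp : p = s t'
    · rw [hp]; exact h.Uhit t'
    · rw [h.Uother t' p (by omega) (by omega) hp]; exact ih (by omega)

theorem U_some (h : Strip N U H s e) {t t' p : ℕ} (htt : t ≤ t') (h1 : t' ≤ p) (h2 : p < t + N)
    {c : Bool} (hU : U t' p = some c) : U t p = some c := by
  induction t', htt using Nat.le_induction with
  | base => exact hU
  | succ t' ht ih =>
    by_cases hp : p = s t'
    · rw [hp, h.Uhit t'] at hU; cases hU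
    · rw [h.Uother t' p (by omega) (by omega) hp] at hU; exact ih (by omega) hU

theorem exists_hit (h : Strip N U H s e) {p : ℕ} (hp : p < N) (hU : U 0 p ≠ none) :
    ∃ i, i < p ∧ s i = p := by
  by_contra hcon
  push Not at hcon
  have : ∀ t, t ≤ p → U t p = U 0 p := by
    intro t
    induction t with
    | zero => intro _; rfl
    | succ t ih =>
      intro ht
      rw [h.Uother t p (by omega) (by omega) (Ne.symm (hcon t (by omega))), ih (by omega)]
  have h1 := this p le_rfl
  rw [h.U00] at h1
  exact hU h1.symm

/-- F2 -/
theorem hit_of_A (h : Strip N U H s e) {j : ℕ} (hj : j < N) (hA : U 0 j = none) : s j < N := by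
  by_contra hcon
  push Not at hcon
  have key : ∀ m, j + 1 ≤ m → m ≤ N → ∀ b, ∀ t ≤ j, H (j + 1) m b < H t m b := by
    intro m hm
    induction m, hm using Nat.le_induction with
    | base =>
      intro hN b t ht
      have hUt : U t j = none := h.U_none (Nat.zero_le _) ht (by omega) hA
      rw [h.H0, h.Hsucc t j b ht (by omega), hUt]
      have := h.Hnn t j b ht (by omega)
      simp only [stp]; omega
    | succ m hm ih =>
      intro hN b t ht
      have ih := ih (by omega)
      rw [h.Hsucc t m b (by omega) (by omega), h.Hsucc (j + 1) m b (by omega) (by omega)]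
      -- compare letters
      have hUU : U (j + 1) m = U t m := by
        by_contra hne
        -- hit time
        have hex : ∃ T, t ≤ T ∧ T ≤ j ∧ s T = m := by
          by_contra hc2
          push Not at hc2
          have : ∀ t', t ≤ t' → t' ≤ j + 1 → U t' m = U t m := by
            intro t' h1
            induction t', h1 using Nat.le_induction with
            | base => intro _; rfl
            | succ t' h1 ih2 =>
              intro h2
              rw [h.Uother t' m (by omega) (by omega) (Ne.symm (hc2 t' h1 (by omega))),
                ih2 (by omega)]
          exact hne (this (j + 1) (by omega) le_rfl)
        obtain ⟨T, hT1, hT2, hT3⟩ := hex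
        have hTj : T ≠ j := by rintro rfl; omega
        have e1 := h.H1 T m (e T) (by omega) (by omega)
        have e2 := h.Hhit T
        rw [hT3] at e2
        have e3 := ih (e T) (T + 1) (by omega)
        have e4 := h.Hnn (j + 1) m (e T) (by omega) (by omega)
        omega
      rw [hUU]
      have := ih b t ht
      omega
  have h1 := key N (by omega) le_rfl true 0 (by omega)
  have h2 := h.HN 0 true
  have h3 := h.Hnn (j + 1) N true (by omega) (by omega)
  rw [Nat.zero_add] at h2
  omega

end Strip

/-- unmatched `A`s of the left part -/
def leftS (N : ℕ) (H : ℕ → ℕ → Bool → ℤ) (t : ℕ) : Bool → Set ℕ := fun b =>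
  {p | t ≤ p ∧ p < N ∧ ∀ q, p < q → q ≤ N → H t p b < H t q b}

/-- unmatched letters of the right part -/
def rightS (N : ℕ) (H : ℕ → ℕ → Bool → ℤ) (t : ℕ) : Bool → Set ℕ := fun b =>
  {j | j < t ∧ ∀ q, N ≤ q → q ≤ j + N → H t (j + N + 1) b < H t q b}

open Classical in
noncomputable def rightF (N : ℕ) (H : ℕ → ℕ → Bool → ℤ) (t j : ℕ) : Option Bool :=
  if j ∈ rightS N H t true then some true
  else if j ∈ rightS N H t false then some false else none

namespace Strip

variable {N : ℕ} {U : ℕ → ℕ → Option Bool} {H : ℕ → ℕ → Bool → ℤ} {s : ℕ → ℕ} {e : ℕ → Bool}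

theorem right_letter (h : Strip N U H s e) {t j : ℕ} {b : Bool} (ht : t ≤ N)
    (hj : j ∈ rightS N H t b) : U t (j + N) = some b := by
  have h1 := hj.1
  have h2 := hj.2 (j + N) (by omega) le_rfl
  rw [h.Hsucc t (j + N) b (by omega) (by omega)] at h2
  cases hU : U t (j + N) with
  | none => rw [hU] at h2; simp [stp] at h2
  | some c =>
    rw [hU] at h2
    simp only [stp] at h2
    split_ifs at h2 with hc
    · rw [hc]
    · omega

theorem rightF_iff (h : Strip N U H s e) {t j : ℕ} {b : Bool} (ht : t ≤ N) :
    rightF N H t j = some b ↔ j ∈ rightS N H t b := by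
  constructor
  · intro hf
    unfold rightF at hf
    split_ifs at hf with h1 h2
    · cases hf; exact h1
    · cases hf; exact h2
  · intro hj
    have hl := h.right_letter ht hj
    unfold rightF
    split_ifs with h1 h2
    · rw [← h.right_letter ht h1, hl]
    · rw [← h.right_letter ht h2, hl]
    · cases b
      · exact absurd hj h2
      · exact absurd hj h1

theorem rightF_ext (h : Strip N U H s e) {t j t' j' : ℕ} (ht : t ≤ N) (ht' : t' ≤ N)
    (hh : ∀ b, j ∈ rightS N H t b ↔ j' ∈ rightS N H t' b) :
    rightF N H t j = rightF N H t' j' := by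
  apply Option.ext
  intro b
  rw [h.rightF_iff ht, h.rightF_iff ht', hh]

theorem rightF_none (h : Strip N U H s e) {t j : ℕ} (ht : t ≤ N)
    (hh : ∀ b, j ∉ rightS N H t b) : rightF N H t j = none := by
  rw [Option.eq_none_iff_forall_ne_some]
  intro b hb
  exact hh b ((h.rightF_iff ht).1 hb)

theorem left_A (h : Strip N U H s e) {t : ℕ} (ht : t < N) (hs : N ≤ s t) :
    leftS N H t = fun b => insert t (leftS N H (t + 1) b) := by
  funext b
  ext p
  simp only [leftS, Set.mem_ofPred_eq, Set.mem_insert_iff]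
  constructor
  · rintro ⟨h1, h2, h3⟩
    rcases Nat.eq_or_lt_of_le h1 with h4 | h4
    · exact Or.inl h4.symm
    · refine Or.inr ⟨h4, h2, fun q hq hqN => ?_⟩
      rw [h.H1 t p b h4 (by omega), h.H1 t q b (by omega) (by omega)]
      have := h3 q hq hqN
      omega
  · rintro (rfl | ⟨h1, h2, h3⟩)
    · refine ⟨le_rfl, ht, fun q hq hqN => ?_⟩
      rw [h.H0]
      exact h.Hpos _ q b hq (by omega)
    · refine ⟨by omega, h2, fun q hq hqN => ?_⟩
      have := h3 q hq hqN
      rw [h.H1 t p b h1 (by omega), h.H1 t q b (by omega) (by omega)] at this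
      omega

theorem left_min (h : Strip N U H s e) {t : ℕ} (hs : s t < N) :
    mnS (leftS N H (t + 1) (e t)) = {s t} := by
  have hl := h.lt t
  have hmem : s t ∈ leftS N H (t + 1) (e t) := by
    refine ⟨by omega, hs, fun q hq hqN => ?_⟩
    rw [h.H1 t _ _ (by omega) le_rfl, h.Hhit, h.H2s t q (by omega) (by omega)]
    have := h.Hnn t q (e t) (by omega) (by omega)
    omega
  have hmin : ∀ p ∈ leftS N H (t + 1) (e t), s t ≤ p := by
    rintro p ⟨h1, h2, h3⟩
    by_contra hc
    have := h3 (s t) (by omega) (by omega)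
    rw [h.H1 t (s t) _ (by omega) le_rfl, h.Hhit] at this
    have := h.Hnn (t + 1) p (e t) (by omega) (by omega)
    omega
  ext x
  simp only [mnS, Set.mem_ofPred_eq, Set.mem_singleton_iff]
  constructor
  · rintro ⟨h1, h2⟩
    exact le_antisymm (h2 _ hmem) (hmin _ h1)
  · rintro rfl
    exact ⟨hmem, hmin⟩

/-- last index with small height is an unmatched `A` -/
theorem exists_low (h : Strip N U H s e) {t i : ℕ} (hs : s t < N) (b : Bool) (hi : t + 1 ≤ i)
    (hi2 : i ≤ s t) (v : ℤ) (hv : H (t + 1) i b ≤ v)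
    (hq : ∀ q, s t < q → q ≤ N → v < H (t + 1) q b) :
    ∃ a, i ≤ a ∧ a ≤ s t ∧ a ∈ leftS N H (t + 1) b := by
  classical
  let P : ℕ → Prop := fun a => i ≤ a ∧ H (t + 1) a b ≤ v
  have hP : P i := ⟨le_rfl, hv⟩
  refine ⟨Nat.findGreatest P (s t), ?_, Nat.findGreatest_le _, ?_⟩
  · exact (Nat.findGreatest_spec (P := P) hi2 hP).1
  · have h1 : P (Nat.findGreatest P (s t)) := Nat.findGreatest_spec (P := P) hi2 hP
    have h2 := Nat.findGreatest_le (P := P) (s t)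
    refine ⟨by have := h1.1; omega, by omega, fun q hq1 hq2 => ?_⟩
    have h3 := h1.1
    have h4 := h1.2
    by_cases hqs : q ≤ s t
    · have := Nat.findGreatest_is_greatest (P := P) hq1 hqs
      have h5 : ¬ (H (t + 1) q b ≤ v) := fun h6 => this ⟨by omega, h6⟩
      omega
    · have := hq q (by omega) hq2
      omega

theorem left_BC (h : Strip N U H s e) {t : ℕ} (hs : s t < N) :
    leftS N H t = stepS (e t) t (leftS N H (t + 1)) := by
  have hl := h.lt t
  have hmn := h.left_min hs
  funext b
  ext p
  by_cases hb : b = e t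
  · subst hb
    simp only [stepS, if_true, hmn]
    constructor
    · rintro ⟨h1, h2, h3⟩
      have h4 : s t < p := by
        by_contra hc
        have h5 := h3 (s t + 1) (by omega) (by omega)
        rw [h.Hs] at h5
        have := h.Hnn t p (e t) (by omega) (by omega)
        omega
      refine ⟨⟨by omega, h2, fun q hq hqN => ?_⟩, by simp; omega⟩
      rw [h.H2s t p (by omega) (by omega), h.H2s t q (by omega) (by omega)]
      have := h3 q hq hqN
      omega
    · rintro ⟨h0, h4⟩
      have h5 : s t ≤ p := by
        have : s t ∈ mnS (leftS N H (t + 1) (e t)) := by rw [hmn]; rfl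
        exact this.2 p h0
      have h6 : p ≠ s t := h4
      obtain ⟨h1, h2, h3⟩ := h0
      refine ⟨by omega, h2, fun q hq hqN => ?_⟩
      have := h3 q hq hqN
      rw [h.H2s t p (by omega) (by omega), h.H2s t q (by omega) (by omega)] at this
      omega
  · have hlow : ∀ a, a ∈ lowS (leftS N H (t + 1) b) (leftS N H (t + 1) (e t)) ↔
        a ∈ leftS N H (t + 1) b ∧ a ≤ s t := by
      intro a
      have hm : s t ∈ mnS (leftS N H (t + 1) (e t)) := by rw [hmn]; rfl
      constructor
      · rintro ⟨h1, h2⟩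
        exact ⟨h1, h2 _ hm.1⟩
      · rintro ⟨h1, h2⟩
        exact ⟨h1, fun y hy => h2.trans (hm.2 y hy)⟩
    simp only [stepS, if_neg hb]
    constructor
    · intro hp
      obtain ⟨h1, h2, h3⟩ := hp
      rcases Nat.eq_or_lt_of_le h1 with h4 | h4
      · subst h4
        right
        refine ⟨rfl, ?_⟩
        obtain ⟨a, ha1, ha2, ha3⟩ := h.exists_low hs b le_rfl (by omega) 0 (by rw [h.H0])
          (fun q hq1 hq2 => by
            have := h3 q (by omega) hq2
            rw [h.H0] at this
            rw [h.H2o t q b hb (by omega) (by omega)]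
            exact this)
        exact ⟨a, (hlow a).2 ⟨ha3, ha2⟩⟩
      · left
        by_cases hps : p ≤ s t
        · have hpne : p ≠ s t := by
            rintro rfl
            have := h3 (s t + 1) (by omega) (by omega)
            rw [h.Hhito t b hb] at this
            omega
          have e1 := h.H1 t p b h4 hps
          refine ⟨⟨h4, h2, fun q hq hqN => ?_⟩, fun hmx => ?_⟩
          · have := h3 q hq hqN
            by_cases hqs : q ≤ s t
            · rw [e1, h.H1 t q b (by omega) hqs]
              omega
            · rw [e1, h.H2o t q b hb (by omega) (by omega)]
              omega
          · have e2 := (h.Hge (t + 1) p b h4 (by omega)).2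
            obtain ⟨a, ha1, ha2, ha3⟩ := h.exists_low hs b (i := p + 1) (by omega) (by omega)
              (H (t + 1) p b + 1) e2
              (fun q hq1 hq2 => by
                have := h3 q (by omega) hq2
                rw [h.H2o t q b hb (by omega) (by omega)]
                omega)
            have := hmx.2 a ((hlow a).2 ⟨ha3, ha2⟩)
            omega
        · refine ⟨⟨by omega, h2, fun q hq hqN => ?_⟩, fun hmx => ?_⟩
          · rw [h.H2o t q b hb (by omega) (by omega), h.H2o t p b hb (by omega) (by omega)]
            exact h3 q hq hqN
          · exact hps ((hlow p).1 hmx.1).2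
    · rintro (⟨⟨h1, h2, h3⟩, h4⟩ | ⟨rfl, a, ha⟩)
      · refine ⟨by omega, h2, fun q hq hqN => ?_⟩
        have h5 := h3 q hq hqN
        by_cases hps : p ≤ s t
        · have e1 := h.H1 t p b h1 hps
          by_cases hqs : q ≤ s t
          · have := h.H1 t q b (by omega) hqs
            omega
          · have e2 := h.H2o t q b hb (by omega) (by omega)
            have hex : ∃ a, a ∈ leftS N H (t + 1) b ∧ a ≤ s t ∧ p < a := by
              by_contra hc
              push Not at hc
              apply h4
              refine ⟨(hlow p).2 ⟨⟨h1, h2, h3⟩, hps⟩, fun y hy => ?_⟩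
              have := (hlow y).1 hy
              exact hc y this.1 this.2
            obtain ⟨a, ha1, ha2, ha3⟩ := hex
            have e3 := h3 a ha3 (by omega)
            have e4 := ha1.2.2 q (by omega) hqN
            omega
        · rw [h.H2o t q b hb (by omega) (by omega), h.H2o t p b hb (by omega) (by omega)] at h5
          exact h5
      · have ha := (hlow a).1 ha
        obtain ⟨⟨h1, h2, h3⟩, h4⟩ := ha
        refine ⟨le_rfl, by omega, fun q hq hqN => ?_⟩
        rw [h.H0]
        by_cases hqs : q ≤ s p
        · exact h.Hpos _ q b hq hqs
        · have e1 := h3 q (by omega) hqN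
          have e2 := h.Hnn (p + 1) a b h1 (by omega)
          rw [h.H2o p q b hb (by omega) (by omega)] at e1
          omega

theorem right_BC (h : Strip N U H s e) {t : ℕ} (ht : t < N) (hs : s t < N) (j : ℕ) :
    rightF N H (t + 1) j = if j = t then some (e t) else rightF N H t j := by
  by_cases hj : j = t
  · subst hj
    rw [if_pos rfl, h.rightF_iff (by omega)]
    refine ⟨by omega, fun q hq1 hq2 => ?_⟩
    rw [show j + N + 1 = j + 1 + N by omega, h.HN, h.H2s j q (by omega) (by omega)]
    have := h.Hnn j q (e j) (by omega) (by omega)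
    omega
  · rw [if_neg hj]
    apply h.rightF_ext (by omega) (by omega)
    intro b
    constructor
    · rintro ⟨h1, h2⟩
      refine ⟨by omega, fun q hq1 hq2 => ?_⟩
      have := h2 q hq1 hq2
      rw [h.H2 t q b (by omega) (by omega), h.H2 t _ b (by omega) (by omega)] at this
      omega
    · rintro ⟨h1, h2⟩
      refine ⟨by omega, fun q hq1 hq2 => ?_⟩
      have := h2 q hq1 hq2
      rw [h.H2 t q b (by omega) (by omega), h.H2 t _ b (by omega) (by omega)]
      omega

theorem right_A (h : Strip N U H s e) {t p : ℕ} (ht : t < N) (hs : s t = p + N) :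
    ∃ q, p < q ∧ q < t ∧ p ∈ rightS N H t (e t) ∧ q ∈ rightS N H t (!(e t)) ∧
      (∀ j b, p < j → j < q → j ∉ rightS N H t b) ∧
      (∀ j, p < j → j ∉ rightS N H t (e t)) ∧
      (∀ b, p ∉ rightS N H (t + 1) b) ∧ (∀ b, q ∉ rightS N H (t + 1) b) ∧
      (∀ j b, j ≠ p → j ≠ q → (j ∈ rightS N H (t + 1) b ↔ j ∈ rightS N H t b)) := by
  classical
  have hl := h.lt t
  have hlN := h.ltN t
  have hsx : s t + 1 = p + N + 1 := by omega
  have hh0 := h.Hs t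
  have hh1 := h.Hhit t
  rw [hs] at hh0 hh1
  have hbe : ∀ b, b ≠ e t → b = !(e t) := fun b hb => bool_of_ne hb
  have hne : (!(e t)) ≠ e t := by cases e t <;> decide
  have hho : H t (p + N + 1) (!(e t)) = H t (p + N) (!(e t)) := by
    have := h.Hhito t _ hne
    rwa [hs] at this
  have hk1 : ∀ i b, N ≤ i → i ≤ p + N → H (t + 1) i b = H t i b - 1 := fun i b h1 h2 =>
    h.H1 t i b (by omega) (by omega)
  have hk2 : ∀ i, p + N + 1 ≤ i → i ≤ t + N → H (t + 1) i (e t) = H t i (e t) + 1 :=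
    fun i h1 h2 => h.H2s t i (by omega) (by omega)
  have hk3 : ∀ i, p + N + 1 ≤ i → i ≤ t + N → H (t + 1) i (!(e t)) = H t i (!(e t)) :=
    fun i h1 h2 => h.H2o t i _ hne (by omega) (by omega)
  have hpe : p ∈ rightS N H t (e t) := by
    refine ⟨by omega, fun i h1 h2 => ?_⟩
    rw [hh0]
    exact h.Hpos t i _ (by omega) (by omega)
  have hgt : ∀ j, p < j → j ∉ rightS N H t (e t) := by
    rintro j hj ⟨h1, h2⟩
    have := h2 (p + N + 1) (by omega) (by omega)
    have := h.Hnn t (j + N + 1) (e t) (by omega) (by omega)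
    omega
  have hpo : p ∉ rightS N H t (!(e t)) := by
    rintro ⟨h1, h2⟩
    have := h2 (p + N) (by omega) le_rfl
    omega
  -- first index below everything so far
  let P : ℕ → Prop := fun i => N ≤ i ∧ ∀ i', N ≤ i' → i' ≤ p + N + 1 →
    H t i (!(e t)) < H t i' (!(e t))
  have hPex : ∃ i, P i := by
    refine ⟨t + N, by omega, fun i' h1 h2 => ?_⟩
    rw [h.HN]
    by_cases h3 : i' ≤ p + N
    · exact h.Hpos t i' _ (by omega) (by omega)
    · have : i' = p + N + 1 := by omega
      rw [this, hho]
      exact h.Hpos t _ _ (by omega) (by omega)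
  obtain ⟨i, hi, hmin⟩ : ∃ i, P i ∧ ∀ m < i, ¬ P m :=
    ⟨Nat.find hPex, Nat.find_spec hPex, fun m hm => Nat.find_min hPex hm⟩
  have hilt : i ≤ t + N := by
    by_contra hc
    apply hmin (t + N) (by omega)
    refine ⟨by omega, fun i' h1 h2 => ?_⟩
    rw [h.HN]
    by_cases h3 : i' ≤ p + N
    · exact h.Hpos t i' _ (by omega) (by omega)
    · have : i' = p + N + 1 := by omega
      rw [this, hho]
      exact h.Hpos t _ _ (by omega) (by omega)
  have higt : p + N + 1 < i := by
    by_contra hc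
    have := hi.2 i hi.1 (by omega)
    omega
  obtain ⟨q, rfl⟩ : ∃ q, i = q + N + 1 := ⟨i - N - 1, by omega⟩
  have hq : q ∈ rightS N H t (!(e t)) := by
    refine ⟨by omega, fun i' h1 h2 => ?_⟩
    by_cases h3 : i' ≤ p + N + 1
    · exact hi.2 i' h1 h3
    · have h4 := hmin i' (by omega)
      simp only [P, not_and, not_forall, not_lt] at h4
      obtain ⟨i'', h5, h6, h7⟩ := h4 h1
      have := hi.2 i'' h5 h6
      omega
  have hbetween : ∀ j, p < j → j < q → j ∉ rightS N H t (!(e t)) := by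
    rintro j h1 h2 ⟨h3, h4⟩
    exact hmin (j + N + 1) (by omega) ⟨by omega, fun i' h5 h6 => h4 i' h5 (by omega)⟩
  refine ⟨q, by omega, by omega, hpe, hq, ?_, hgt, ?_, ?_, ?_⟩
  · intro j b h1 h2
    by_cases hb : b = e t
    · subst hb; exact hgt j h1
    · rw [hbe b hb]; exact hbetween j h1 h2
  · rintro b ⟨h1, h2⟩
    have h3 := h2 (p + N) (by omega) le_rfl
    rw [hk1 _ _ (by omega) le_rfl] at h3
    by_cases hb : b = e t
    · subst hb
      rw [hk2 _ le_rfl (by omega)] at h3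
      omega
    · rw [hbe b hb, hk3 _ le_rfl (by omega)] at h3
      omega
  · rintro b ⟨h1, h2⟩
    by_cases hb : b = e t
    · subst hb
      have h3 := h2 (p + N) (by omega) (by omega)
      rw [hk1 _ _ (by omega) le_rfl, hk2 _ (by omega) (by omega)] at h3
      have := h.Hnn t (q + N + 1) (e t) (by omega) (by omega)
      omega
    · rw [hbe b hb] at h2
      have h4 := hmin (q + N) (by omega)
      simp only [P, not_and, not_forall, not_lt] at h4
      obtain ⟨i'', h5, h6, h7⟩ := h4 (by omega)
      have h8 := (h.Hge t (q + N) (!(e t)) (by omega) (by omega)).1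
      by_cases h9 : i'' ≤ p + N
      · have h3 := h2 i'' h5 (by omega)
        rw [hk1 _ _ h5 h9, hk3 _ (by omega) (by omega)] at h3
        omega
      · have : i'' = p + N + 1 := by omega
        subst this
        have h3 := h2 (p + N) (by omega) (by omega)
        rw [hk1 _ _ (by omega) le_rfl, hk3 _ (by omega) (by omega)] at h3
        omega
  · intro j b hjp hjq
    rcases Nat.lt_or_gt_of_ne hjp with hj | hj
    · -- left of the hit
      constructor
      · rintro ⟨h1, h2⟩
        refine ⟨by omega, fun i' h3 h4 => ?_⟩
        have := h2 i' h3 h4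
        rw [hk1 i' b h3 (by omega), hk1 _ b (by omega) (by omega)] at this
        omega
      · rintro ⟨h1, h2⟩
        refine ⟨by omega, fun i' h3 h4 => ?_⟩
        have := h2 i' h3 h4
        rw [hk1 i' b h3 (by omega), hk1 _ b (by omega) (by omega)]
        omega
    · by_cases hb : b = e t
      · subst hb
        constructor
        · rintro ⟨h1, h2⟩
          have h3 := h2 (p + N) (by omega) (by omega)
          rw [hk1 _ _ (by omega) le_rfl] at h3
          have := h.Hnn (t + 1) (j + N + 1) (e t) (by omega) (by omega)
          omega
        · intro h1
          exact absurd h1 (hgt j hj)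
      · rw [hbe b hb]
        constructor
        · rintro ⟨h1, h2⟩
          have hjt : j ≠ t := by
            rintro rfl
            have h3 := h2 (j + N) (by omega) le_rfl
            rw [hk3 _ (by omega) le_rfl, h.HN, show j + N + 1 = j + 1 + N by omega, h.HN] at h3
            omega
          refine ⟨by omega, fun i' h3 h4 => ?_⟩
          have h5 := h2 i' h3 h4
          rw [hk3 (j + N + 1) (by omega) (by omega)] at h5
          by_cases h6 : i' ≤ p + N
          · rw [hk1 i' _ h3 h6] at h5; omega
          · rw [hk3 i' (by omega) (by omega)] at h5; exact h5
        · rintro ⟨h1, h2⟩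
          have hjq' : q < j := by
            by_contra hc
            exact hbetween j hj (by omega) ⟨h1, h2⟩
          refine ⟨by omega, fun i' h3 h4 => ?_⟩
          have h5 := h2 i' h3 h4
          rw [hk3 (j + N + 1) (by omega) (by omega)]
          by_cases h6 : i' ≤ p + N
          · rw [hk1 i' _ h3 h6]
            have h7 := h2 (q + N + 1) (by omega) (by omega)
            have h8 := hi.2 i' h3 (by omega)
            omega
          · rw [hk3 i' (by omega) (by omega)]; exact h5

/-- F1 -/
theorem main_inv (h : Strip N U H s e) (t : ℕ) (ht : t ≤ N) (j : ℕ) (hj : j < N)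
    (hU : U 0 j ≠ none) :
    (∃ i, t ≤ i ∧ s i = j) ∨ j ∈ RunS (rightF N H t) t (leftS N H t) ∨
      (j < t ∧ U t (j + N) ≠ none ∧ rightF N H t j = none) := by
  induction t with
  | zero =>
    obtain ⟨i, h1, h2⟩ := h.exists_hit hj hU
    exact Or.inl ⟨i, Nat.zero_le _, h2⟩
  | succ t ih =>
    have hl := h.lt t
    have hlN := h.ltN t
    by_cases hs : s t < N
    · have hF := h.right_BC (by omega) hs
      have hrun : RunS (rightF N H (t + 1)) (t + 1) (leftS N H (t + 1)) =
          {s t} ∪ RunS (rightF N H t) t (leftS N H t) := by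
        rw [RunS_some (by rw [hF]; simp : rightF N H (t + 1) t = some (e t)), h.left_min hs,
          ← h.left_BC hs]
        congr 1
        apply RunS_congr
        intro j hj
        rw [hF, if_neg (by omega)]
      rcases ih (by omega) with ⟨i, h1, h2⟩ | h1 | ⟨h1, h2, h3⟩
      · rcases Nat.eq_or_lt_of_le h1 with h3 | h3
        · right; left
          rw [hrun]
          left
          rw [h3, h2]; rfl
        · exact Or.inl ⟨i, h3, h2⟩
      · right; left
        rw [hrun]
        exact Or.inr h1
      · right; right
        refine ⟨by omega, ?_, ?_⟩
        · rw [h.Uother t _ (by omega) (by omega) (by omega)]; exact h2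
        · rw [hF, if_neg (by omega)]; exact h3
    · obtain ⟨p, hp⟩ : ∃ p, s t = p + N := ⟨s t - N, by omega⟩
      obtain ⟨q, hpq, hqt, hpe, hqe, hbt, hgt, hp1, hq1, hoth⟩ := h.right_A (by omega) hp
      have htN : t ≤ N := by omega
      have hnt : ∀ b, t ∉ rightS N H t b := fun b hb => lt_irrefl _ hb.1
      have hrun : RunS (rightF N H t) t (leftS N H t) =
          {t} ∪ ({q} ∪ RunS (rightF N H (t + 1)) (t + 1) (leftS N H (t + 1))) := by
        have hnone : rightF N H (t + 1) t = none :=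
          h.rightF_none ht (fun b hb => hnt b ((hoth t b (by omega) (by omega)).1 hb))
        rw [h.left_A (by omega) (by omega), RunS_none hnone]
        apply RunS_K3 (p := p) (q := q) (e := e t) _ hpq ((h.rightF_iff htN).2 hpe)
          ((h.rightF_iff htN).2 hqe)
        · intro j h1 h2
          exact h.rightF_none htN (fun b => hbt j b h1 h2)
        · exact h.rightF_none ht hp1
        · exact h.rightF_none ht hq1
        · intro j h1 h2
          exact h.rightF_ext ht htN (fun b => hoth j b h1 h2)
        · exact hqt
        · exact le_rfl
        · intro j h1 h2 h3
          exact hgt j (by omega) ((h.rightF_iff htN).1 h3)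
        · intro b x hx
          exact hx.1
      rcases ih (by omega) with ⟨i, h1, h2⟩ | h1 | ⟨h1, h2, h3⟩
      · rcases Nat.eq_or_lt_of_le h1 with h3 | h3
        · subst h3; omega
        · exact Or.inl ⟨i, h3, h2⟩
      · rw [hrun] at h1
        rcases h1 with h1 | h1 | h1
        · have h1 : j = t := h1
          subst h1
          right; right
          refine ⟨by omega, by rw [h.Utop]; simp, ?_⟩
          exact h.rightF_none ht (fun b hb => hnt b ((hoth j b (by omega) (by omega)).1 hb))
        · have h1 : j = q := h1
          subst h1
          right; right
          refine ⟨by omega, ?_, h.rightF_none ht hq1⟩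
          rw [h.Uother t _ (by omega) (by omega) (by omega), h.right_letter htN hqe]
          simp
        · exact Or.inr (Or.inl h1)
      · right; right
        have hjp : j ≠ p := by
          rintro rfl
          rw [(h.rightF_iff htN).2 hpe] at h3
          cases h3
        refine ⟨by omega, ?_, ?_⟩
        · rw [h.Uother t _ (by omega) (by omega) (by omega)]; exact h2
        · by_cases hjq : j = q
          · rw [hjq]; exact h.rightF_none ht hq1
          · rw [h.rightF_ext ht htN (fun b => hoth j b hjp hjq)]; exact h3

theorem A_of_wrap (h : Strip N U H s e) {i j : ℕ} (hi : i < N) (hs : s i = j + N) :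
    U 0 j = none := by
  by_contra hU
  have h1 := h.ltN i
  rcases h.main_inv N le_rfl j (by omega) hU with ⟨k, h2, h3⟩ | h2 | ⟨h2, h3, h4⟩
  · have := h.lt k
    omega
  · rw [RunS_empty] at h2
    · exact h2
    · intro b
      ext p
      simp only [leftS, Set.mem_ofPred_eq, Set.mem_empty_iff_false, iff_false]
      omega
  · apply h3
    have h5 := h.Uhit i
    rw [hs] at h5
    exact h.U_none (by omega) (by omega) (by omega) h5

end Strip

/-- The colour of a letter. -/
def kcol : KLetter → Option Bool
  | A => none
  | B => some true
  | C => some false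

/-- The letter of a colour. -/
def klet (b : Bool) : KLetter := if b then B else C

/-- The colour of the letter in position `q` (0-indexed). -/
def kg (r : List KLetter) (q : ℕ) : Option Bool := kcol (r.getD q A)

/-- The height after `k` letters. -/
def kh (r : List KLetter) (b : Bool) (k : ℕ) : ℤ :=
  ((r.take k).count A : ℤ) - ((r.take k).count (klet b) : ℤ)

theorem kh_zero (r : List KLetter) (b : Bool) : kh r b 0 = 0 := by simp [kh]

theorem kh_succ (r : List KLetter) (b : Bool) (k : ℕ) (hk : k < r.length) :
    kh r b (k + 1) = kh r b k + stp b (kg r k) := by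
  unfold kh kg
  rw [List.take_add_one, List.getElem?_eq_getElem hk, List.getD_eq_getElem _ _ hk]
  simp only [Option.toList_some, List.count_append]
  cases r[k] <;> cases b <;> simp [klet, stp, kcol] <;> ring

/-- Height version of the Kreweras condition. -/
structure KK (N : ℕ) (r : List KLetter) : Prop where
  len : r.length = N
  nn : ∀ b k, k ≤ N → 0 ≤ kh r b k
  top : ∀ b, kh r b N = 0

theorem KK.of_word {n : ℕ} {w : List KLetter} (hw : IsKrewerasWord n w) : KK (3 * n) w := by
  obtain ⟨h1, h2, h3, h4, h5⟩ := hw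
  refine ⟨h1, ?_, ?_⟩
  · intro b k _
    have := h5 k
    unfold kh
    cases b <;> simp [klet] <;> omega
  · intro b
    unfold kh
    rw [List.take_of_length_le (by omega)]
    cases b <;> simp [klet] <;> omega

theorem kiota_spec {N : ℕ} {r : List KLetter} (h : KK N r) (hN : 0 < N) :
    1 ≤ kiota r ∧ kiota r ≤ N ∧ (∃ b, kh r b (kiota r) = 0) ∧
      ∀ k, 1 ≤ k → k < kiota r → ∀ b, kh r b k ≠ 0 := by
  have key : ∀ k, (decide (1 ≤ k) &&
      (((r.take k).count A == (r.take k).count B) ||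
       ((r.take k).count A == (r.take k).count C))) = true ↔ 1 ≤ k ∧ ∃ b, kh r b k = 0 := by
    intro k
    simp [kh, klet, sub_eq_zero]
    intro _
    tauto
  have e1 : kiota r = ((List.range (r.length + 1)).find? fun k => (decide (1 ≤ k) &&
      (((r.take k).count A == (r.take k).count B) ||
       ((r.take k).count A == (r.take k).count C)))).getD 0 := by
    unfold kiota
    rw [List.headD_eq_head?_getD, List.head?_filter]
  cases hf : ((List.range (r.length + 1)).find? fun k => (decide (1 ≤ k) &&
      (((r.take k).count A == (r.take k).count B) ||
       ((r.take k).count A == (r.take k).count C)))) with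
  | none =>
    exfalso
    rw [List.find?_eq_none] at hf
    exact hf N (by simp [h.len]) ((key N).2 ⟨hN, true, h.top _⟩)
  | some k0 =>
    rw [hf] at e1
    simp only [Option.getD_some] at e1
    rw [List.find?_range_eq_some] at hf
    obtain ⟨a1, a2, a3⟩ := hf
    rw [key] at a1
    rw [e1]
    have := h.len
    refine ⟨a1.1, by simp at a2; omega, a1.2, ?_⟩
    intro k hk1 hk2 b hb
    have := a3 k hk2
    have h2 := (key k).2 ⟨hk1, b, hb⟩
    rw [h2] at this
    simp at this

theorem KK.pos {N : ℕ} {r : List KLetter} (h : KK N r) (hN : 0 < N) (k : ℕ) (b : Bool)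
    (h1 : 1 ≤ k) (h2 : k < kiota r) : 0 < kh r b k := by
  obtain ⟨a1, a2, a3, a4⟩ := kiota_spec h hN
  have := a4 k h1 h2 b
  have := h.nn b k (by omega)
  omega

theorem KK.first {N : ℕ} {r : List KLetter} (h : KK N r) (hN : 0 < N) : kg r 0 = none := by
  have hh : ∀ b, 0 ≤ stp b (kg r 0) := by
    intro b
    have h1 := h.nn b 1 (by omega)
    rw [kh_succ r b 0 (by have := h.len; omega), kh_zero] at h1
    omega
  cases hg : kg r 0 with
  | none => rfl
  | some c =>
    have := hh c
    rw [hg] at this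
    simp [stp] at this

theorem KK.two {N : ℕ} {r : List KLetter} (h : KK N r) (hN : 0 < N) : 2 ≤ kiota r := by
  obtain ⟨a1, a2, ⟨b, a3⟩, a4⟩ := kiota_spec h hN
  by_contra hc
  have e : kiota r = 0 + 1 := by omega
  rw [e, kh_succ r b 0 (by have := h.len; omega), kh_zero, h.first hN] at a3
  simp [stp] at a3

/-- The colour of the hit letter. -/
def kc (r : List KLetter) : Bool := (kg r (kiota r - 1)).getD true

theorem KK.hit {N : ℕ} {r : List KLetter} (h : KK N r) (hN : 0 < N) :
    kg r (kiota r - 1) = some (kc r) ∧ kh r (kc r) (kiota r) = 0 := by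
  obtain ⟨a1, a2, ⟨b, a3⟩, a4⟩ := kiota_spec h hN
  have h2 := h.two hN
  have hp := h.pos hN (kiota r - 1) b (by omega) (by omega)
  have hs := kh_succ r b (kiota r - 1) (by have := h.len; omega)
  rw [Nat.sub_add_cancel a1, a3] at hs
  have : kg r (kiota r - 1) = some b := by
    cases hg : kg r (kiota r - 1) with
    | none => rw [hg] at hs; simp [stp] at hs; omega
    | some c =>
      rw [hg] at hs
      by_cases hcb : c = b
      · rw [hcb]
      · simp [stp, hcb] at hs; omega
  have hc : kc r = b := by simp [kc, this]
  rw [hc]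
  exact ⟨this, a3⟩

theorem KK.pro_len {N : ℕ} {r : List KLetter} (h : KK N r) (hN : 0 < N) :
    (pro r).length = N := by
  have := h.len
  simp [pro]; omega

theorem KK.pro_top {N : ℕ} {r : List KLetter} (h : KK N r) (hN : 0 < N) :
    kg (pro r) (N - 1) = some (kc r) := by
  rw [← (h.hit hN).1]
  have := h.len
  unfold kg pro
  rw [List.getD_append_right _ _ _ _ (by simp; omega)]
  simp [this]

theorem KK.pro_low {N : ℕ} {r : List KLetter} (h : KK N r) (q : ℕ)
    (hq : q + 1 < N) :
    kg (pro r) q = if q = kiota r - 2 then none else kg r (q + 1) := by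
  have := h.len
  unfold kg pro
  rw [List.getD_append _ _ _ _ (by simp; omega)]
  rw [List.getD_eq_getElem _ _ (by simp; omega), List.getElem_set,
    List.getD_eq_getElem _ _ (by omega)]
  by_cases hc : q = kiota r - 2
  · simp [hc, kcol]
  · simp [hc, Ne.symm hc]

theorem KK.h1 {N : ℕ} {r : List KLetter} (h : KK N r) (hN : 0 < N) (b : Bool) (q : ℕ)
    (hq : q + 2 ≤ kiota r) : kh (pro r) b q = kh r b (q + 1) - 1 := by
  have hl := h.len
  have hl2 := h.pro_len hN
  have hi := (kiota_spec h hN).2.1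
  induction q with
  | zero =>
    rw [kh_zero, kh_succ _ _ _ (by omega), kh_zero, h.first hN]; simp [stp]
  | succ q ih =>
    rw [kh_succ _ _ _ (by omega), kh_succ r _ _ (by omega), ih (by omega),
      h.pro_low q (by omega), if_neg (by omega)]
    ring

theorem KK.h2 {N : ℕ} {r : List KLetter} (h : KK N r) (hN : 0 < N) (b : Bool) (q : ℕ)
    (hq : kiota r ≤ q + 1) (hq2 : q + 1 ≤ N) :
    kh (pro r) b q = kh r b (q + 1) + if kc r = b then 1 else 0 := by
  have hl := h.len
  have hl2 := h.pro_len hN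
  have hi := (kiota_spec h hN).2.1
  have h2 := h.two hN
  have hq' : kiota r - 1 ≤ q := by omega
  induction q, hq' using Nat.le_induction with
  | base =>
    obtain ⟨m, hm⟩ : ∃ m, kiota r = m + 2 := ⟨kiota r - 2, by omega⟩
    have hh := (h.hit hN).1
    rw [hm] at hh ⊢
    simp only [Nat.add_sub_cancel, show m + 2 - 1 = m + 1 by omega] at hh ⊢
    rw [kh_succ _ _ _ (by omega), kh_succ r _ (m + 1) (by omega), h.h1 hN b m (by omega),
      h.pro_low m (by omega), if_pos (by omega), hh]
    by_cases hcb : kc r = b <;> simp [stp, hcb]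
  | succ q hq0 ih =>
    rw [kh_succ _ _ _ (by omega), kh_succ r _ (q + 1) (by omega), ih (by omega) (by omega),
      h.pro_low q (by omega), if_neg (show ¬ q = kiota r - 2 by omega)]
    ring

theorem KK.pro {N : ℕ} {r : List KLetter} (h : KK N r) (hN : 0 < N) : KK N (pro r) := by
  have hl := h.len
  have hl2 := h.pro_len hN
  have hi := (kiota_spec h hN).2.1
  have htop : ∀ b, kh (_root_.pro r) b N = 0 := by
    intro b
    obtain ⟨M, rfl⟩ : ∃ M, N = M + 1 := ⟨N - 1, by omega⟩
    have ht := h.pro_top hN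
    rw [Nat.add_sub_cancel] at ht
    rw [kh_succ _ _ _ (by omega), h.h2 hN b M (by omega) (by omega), h.top, ht]
    by_cases hcb : kc r = b <;> simp [stp, hcb]
  refine ⟨hl2, ?_, htop⟩
  intro b k hk
  by_cases hkN : k = N
  · rw [hkN, htop]
  · by_cases hc : k + 2 ≤ kiota r
    · rw [h.h1 hN b k hc]
      have := h.pos hN (k + 1) b (by omega) (by omega)
      omega
    · rw [h.h2 hN b k (by omega) (by omega)]
      have := h.nn b (k + 1) (by omega)
      split_ifs <;> omega

theorem KK.iter {N : ℕ} {w : List KLetter} (h : KK N w) (hN : 0 < N) (t : ℕ) :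
    KK N (_root_.pro^[t] w) := by
  induction t with
  | zero => exact h
  | succ t ih => rw [Function.iterate_succ_apply']; exact ih.pro hN

theorem KK.strip {N : ℕ} {w : List KLetter} (h : KK N w) (hN : 0 < N) :
    Strip N (fun t p => kg (_root_.pro^[t] w) (p - t)) (fun t p b => kh (_root_.pro^[t] w) b (p - t))
      (fun t => kiota (_root_.pro^[t] w) - 1 + t) (fun t => kc (_root_.pro^[t] w)) := by
  have K := h.iter hN
  refine ⟨?_, ?_, ?_, ?_, ?_, ?_, ?_, ?_, ?_, ?_, ?_, ?_, ?_⟩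
  · intro t
    have := (K t).two hN
    omega
  · intro t
    have := (kiota_spec (K t) hN).2.1
    have := (K t).two hN
    omega
  · intro t
    simpa using ((K t).hit hN).1
  · intro t
    have := (K t).pro_top hN
    simp only [Function.iterate_succ_apply']
    rwa [show t + N - (t + 1) = N - 1 by omega]
  · intro t
    have h2 := (K t).two hN
    have h3 := (kiota_spec (K t) hN).2.1
    simp only [Function.iterate_succ_apply']
    rw [(K t).pro_low _ (by omega), if_pos (by omega)]
  · intro t p h1 h2 h3
    have h4 := (K t).two hN
    simp only [Function.iterate_succ_apply']
    rw [(K t).pro_low _ (by omega), if_neg (by omega)]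
    congr 1
    omega
  · intro t
    simpa using (K t).first hN
  · intro t b
    simp [kh_zero]
  · intro t b
    simpa using (K t).top b
  · intro t p b h1 h2
    exact (K t).nn b _ (by omega)
  · intro t p b h1 h2
    rw [show p + 1 - t = (p - t) + 1 by omega]
    exact kh_succ _ _ _ (by have := (K t).len; omega)
  · intro t p b h1 h2
    have h4 := (K t).two hN
    exact (K t).pos hN _ b (by omega) (by omega)
  · intro t
    have h4 := (K t).two hN
    have := ((K t).hit hN).2
    rwa [show kiota (_root_.pro^[t] w) - 1 + t + 1 - t = kiota (_root_.pro^[t] w) by omega]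

theorem kcol_some {x : KLetter} {b : Bool} (h : kcol x = some b) : x = klet b := by
  cases x <;> cases b <;> simp_all [kcol, klet]

theorem kcol_none {x : KLetter} (h : kcol x = none) : x = A := by
  cases x <;> simp_all [kcol]

theorem klet_ne (b : Bool) : klet b ≠ A := by cases b <;> simp [klet]

/-- For every `i ∈ {1, …, 3n}`: `ε_w(i) ∈ {B, C}`; if `w_{σ_w(i)} ≠ A` then
`ε_w(i) = w_{σ_w(i)}`, and if `w_{σ_w(i)} = A` then `ε_w(i) = w_{σ_w(σ_w(i))}`
(letters are 1-indexed). -/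
theorem keps_properties (n : ℕ) (w : List KLetter) (hw : IsKrewerasWord n w)
    (i : ℕ) (hi1 : 1 ≤ i) (hi2 : i ≤ 3 * n) :
    (keps w i = KLetter.B ∨ keps w i = KLetter.C) ∧
    (w.getD (ksigma n w i - 1) KLetter.A ≠ KLetter.A →
      keps w i = w.getD (ksigma n w i - 1) KLetter.A) ∧
    (w.getD (ksigma n w i - 1) KLetter.A = KLetter.A →
      keps w i = w.getD (ksigma n w (ksigma n w i) - 1) KLetter.A) := by
  have hN : 0 < 3 * n := by omega
  have K := KK.of_word hw
  have S := K.strip hN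
  have hsig : ∀ t, ksigma n w (t + 1) - 1 = (kiota (pro^[t] w) - 1 + t) % (3 * n) := by
    intro t
    have := (K.iter hN t).two hN
    unfold ksigma
    rw [Nat.add_sub_cancel, Nat.add_sub_cancel]
    congr 1
    omega
  have heps : ∀ t, keps w (t + 1) = klet (kc (pro^[t] w)) := by
    intro t
    unfold keps
    rw [Nat.add_sub_cancel]
    exact kcol_some ((K.iter hN t).hit hN).1
  obtain ⟨t, rfl⟩ : ∃ t, i = t + 1 := ⟨i - 1, by omega⟩
  have hlow : ∀ t, kiota (pro^[t] w) - 1 + t < 3 * n →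
      w.getD (kiota (pro^[t] w) - 1 + t) A = klet (kc (pro^[t] w)) := by
    intro t ht
    have h1 := S.lt t
    have h2 := S.Us t
    have h3 := S.U_some (Nat.zero_le t) h1.le (by omega) h2
    simp only [Function.iterate_zero, id, Nat.sub_zero] at h3
    exact kcol_some h3
  rw [hsig t, heps t]
  refine ⟨?_, ?_⟩
  · cases kc (pro^[t] w) <;> simp [klet]
  by_cases hc : kiota (pro^[t] w) - 1 + t < 3 * n
  · rw [Nat.mod_eq_of_lt hc, hlow t hc]
    exact ⟨fun _ => rfl, fun h => absurd h (klet_ne _)⟩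
  · have h1 := S.ltN t
    have h0 := S.lt t
    try simp only at h1 h0
    obtain ⟨j, hj⟩ : ∃ j, kiota (pro^[t] w) - 1 + t = j + 3 * n :=
      ⟨kiota (pro^[t] w) - 1 + t - 3 * n, by omega⟩
    have hjt : j < t := by omega
    have hmod : (kiota (pro^[t] w) - 1 + t) % (3 * n) = j := by
      rw [hj, Nat.add_mod_right, Nat.mod_eq_of_lt (by omega)]
    have hA := S.A_of_wrap (i := t) (j := j) (by omega) hj
    have hs := S.hit_of_A (j := j) (by omega) hA
    try simp only at hs
    have hA2 : w.getD j A = A := by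
      simp only [Function.iterate_zero, id, Nat.sub_zero] at hA
      exact kcol_none hA
    have hsj : ksigma n w (t + 1) = j + 1 := by
      have := hsig t
      rw [hmod] at this
      unfold ksigma at this ⊢
      omega
    rw [hmod, hsj, hsig j, Nat.mod_eq_of_lt hs, hlow j hs, hA2]
    refine ⟨fun h => absurd rfl h, fun _ => ?_⟩
    have hu := S.Us t
    simp only [hj] at hu
    have hv := S.U_some (t := j + 1) (t' := t) (p := j + 3 * n) (by omega) (by omega) (by omega) hu
    have hw2 := S.Utop j
    rw [hw2] at hv
    rw [Option.some.inj hv]
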